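/- Let 1 < p ≤ 2 with Hölder conjugate p*, let λ satisfy 0 < λ < 1/p*, and set σ_j = j^{−λ} for j ∈ ℕ. Then for every ρ > 0 and all constants C, C₁, C₂ ∈ (0,∞) there exist m ∈ ℕ and 1 ≤ n < m such that, for an n×m random matrix G_{n,m} with i.i.d. standard Gaussian entries, Pr[rad(E^m_{p,σ}, ker G_{n,m}) ≤ C·n^{−ρ}] < 1 − C₁·exp(−C₂·n). In other words, the polynomial decay rate of the radius of random information, decay(rad(E^m_{p,σ}, G_{n,m})) := sup{ρ ≥ 0 : ∃ C, C₁, C₂ ∈ (0,∞) such that rad(E^m_{p,σ}, ker G_{n,m}) ≤ C·n^{−ρ} holds with probability at least 1 − C₁·exp(−C₂·n) for all m ∈ ℕ and 1 ≤ n < m}, equals 0. -/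

import Mathlib

open MeasureTheory ProbabilityTheory
open scoped ENNReal NNReal

/-- The `ℓ_p`-(quasi-)norm on `ℝ^m`, for `0 < p ≤ ∞`. -/
noncomputable def lpnorm (p : ℝ≥0∞) {m : ℕ} (x : Fin m → ℝ) : ℝ :=
  if p = ∞ then ⨆ j, |x j| else (∑ j, |x j| ^ p.toReal) ^ (1 / p.toReal)

/-- The `ℓ_p`-ellipsoid with semiaxes `σ`. -/
noncomputable def ellipsoid (p : ℝ≥0∞) {m : ℕ} (σ : Fin m → ℝ) : Set (Fin m → ℝ) :=
  {x | lpnorm p (fun j => x j / σ j) ≤ 1}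

/-- `rad_q(K, E)`: the supremum of the `ℓ_q`-norm over `K ∩ E`. -/
noncomputable def radq (q : ℝ≥0∞) {m : ℕ} (K E : Set (Fin m → ℝ)) : ℝ :=
  sSup (lpnorm q '' (K ∩ E))

/-- The distribution of an `n × m` random matrix with i.i.d. standard Gaussian entries. -/
noncomputable def gaussianMatrix (n m : ℕ) : Measure (Fin n → Fin m → ℝ) :=
  Measure.pi fun _ : Fin n => Measure.pi fun _ : Fin m => gaussianReal 0 1

/-- The kernel of a matrix `A ∈ ℝ^{n×m}`, as a subset of `ℝ^m`. -/
def kerSet {n m : ℕ} (A : Fin n → Fin m → ℝ) : Set (Fin m → ℝ) :=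
  {x | ∀ i, ∑ j, A i j * x j = 0}

/-- The Hölder conjugate `p*` of `p ∈ (1, ∞]`, as a real number
(with the convention `(∞ : ℝ≥0∞).toReal = 0`, so `pstar ∞ = 1`). -/
noncomputable def pstar (p : ℝ≥0∞) : ℝ := (1 - 1 / p.toReal)⁻¹


/-- The linear combination of rows. -/
def rowc {n m : ℕ} (A : Fin n → Fin m → ℝ) (z : Fin n → ℝ) (j : Fin m) : ℝ := ∑ i, z i * A i j

/-- The bad set. -/
def badT {n m : ℕ} (ε : ℝ) (j : Fin m) : Set (Fin n → Fin m → ℝ) :=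
  {A | ∃ z : Fin n → ℝ, ε * ∑ k, rowc A z k ^ 2 < rowc A z j ^ 2}

lemma badT_open {n m : ℕ} (ε : ℝ) (j : Fin m) : IsOpen (badT (n := n) ε j) := by
  have : badT (n := n) ε j = ⋃ z : Fin n → ℝ,
      {A | ε * ∑ k, rowc A z k ^ 2 < rowc A z j ^ 2} := by
    ext A; simp [badT]
  rw [this]
  refine isOpen_iUnion fun z => isOpen_lt ?_ ?_ <;> unfold rowc <;> fun_prop

lemma rowc_orth {n m : ℕ} (A : Fin n → Fin m → ℝ) (z : Fin n → ℝ) (x : Fin m → ℝ)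
    (hx : x ∈ kerSet A) : ∑ k, rowc A z k * x k = 0 := by
  unfold rowc
  simp_rw [Finset.sum_mul]
  rw [Finset.sum_comm]
  refine Finset.sum_eq_zero fun i _ => ?_
  have := hx i
  simp_rw [mul_assoc]
  rw [← Finset.mul_sum, this, mul_zero]

lemma proj_exists {n m : ℕ} (A : Fin n → Fin m → ℝ) :
    ∃ (z : Fin m → Fin n → ℝ),
      (∀ j, (fun k => (if k = j then 1 else 0) - rowc A (z j) k) ∈ kerSet A) ∧
      ∑ j, rowc A (z j) j ≤ n := by
  classical
  let a : Fin n → EuclideanSpace ℝ (Fin m) := fun i => WithLp.toLp 2 (A i)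
  let W : Submodule ℝ (EuclideanSpace ℝ (Fin m)) := Submodule.span ℝ (Set.range a)
  let e : Fin m → EuclideanSpace ℝ (Fin m) := fun j => EuclideanSpace.single j 1
  have hmem : ∀ j, ∃ z : Fin n → ℝ, ∑ i, z i • a i = W.starProjection (e j) := by
    intro j
    have : W.starProjection (e j) ∈ W := Submodule.starProjection_apply_mem _ _
    exact (Submodule.mem_span_range_iff_exists_fun ℝ).1 this
  choose z hz using hmem
  have hzk : ∀ j k, rowc A (z j) k = W.starProjection (e j) k := by
    intro j k
    rw [← hz j]
    simp [rowc, a]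
  refine ⟨z, ?_, ?_⟩
  · intro j i
    have h1 : inner ℝ (a i) (e j - W.starProjection (e j)) = 0 := by
      have := Submodule.sub_starProjection_mem_orthogonal (K := W) (e j)
      exact this (a i) (Submodule.subset_span ⟨i, rfl⟩)
    rw [PiLp.inner_apply] at h1
    refine Eq.trans ?_ h1
    refine Finset.sum_congr rfl fun k _ => ?_
    simp [hzk, a, e, mul_comm, Pi.single_apply]
  · simp_rw [hzk]
    let b := stdOrthonormalBasis ℝ W
    have h2 : ∀ j, W.starProjection (e j) j = ∑ i, ((b i : EuclideanSpace ℝ (Fin m)) j) ^ 2 := by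
      intro j
      have := b.sum_repr (W.orthogonalProjectionOnto (e j))
      have h4 : ∀ i, b.repr (W.orthogonalProjectionOnto (e j)) i =
          (b i : EuclideanSpace ℝ (Fin m)) j := by
        intro i
        rw [b.repr_apply_apply, Submodule.inner_orthogonalProjectionOnto_eq_of_mem_left]
        · simp [e, EuclideanSpace.inner_single_right]
      rw [Submodule.starProjection_apply, ← this]
      simp [h4, sq]
    simp_rw [h2]
    rw [Finset.sum_comm]
    have h3 : ∀ i, ∑ j, ((b i : EuclideanSpace ℝ (Fin m)) j) ^ 2 = 1 := by
      intro i
      have : ‖(b i : EuclideanSpace ℝ (Fin m))‖ = 1 := b.norm_eq_one i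
      rw [EuclideanSpace.norm_eq, Real.sqrt_eq_one] at this
      simpa using this
    simp_rw [h3]
    simp
    have := finrank_range_le_card (R := ℝ) a
    simpa [Set.finrank] using this

lemma sum_sq_eq {n m : ℕ} (A : Fin n → Fin m → ℝ) (z : Fin m → Fin n → ℝ) (j : Fin m) (w)
    (h : (fun k => (if k = j then 1 else 0) - rowc A (z j) k) ∈ kerSet A) :
    rowc A w j = ∑ k, rowc A w k * rowc A (z j) k := by
  have := rowc_orth A w _ h
  simp [mul_sub, Finset.sum_sub_distrib] at this
  linarith

lemma card_bad {n m : ℕ} (ε : ℝ) (hε : 0 < ε) (A : Fin n → Fin m → ℝ) :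
    ∑ j, (badT ε j).indicator (fun _ => (1 : ℝ)) A ≤ n / ε := by
  classical
  obtain ⟨z, h1, h2⟩ := proj_exists A
  rw [le_div_iff₀ hε, Finset.sum_mul]
  refine (Finset.sum_le_sum fun j _ => ?_).trans h2
  have hsq := sum_sq_eq A z j (z j) (h1 j)
  by_cases hA : A ∈ badT ε j
  · rw [Set.indicator_of_mem hA, one_mul]
    obtain ⟨w, hw⟩ := hA
    have hww := sum_sq_eq A z j w (h1 j)
    have cs := Finset.sum_mul_sq_le_sq_mul_sq Finset.univ (rowc A w) (rowc A (z j))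
    rw [← hww] at cs
    have : ∑ k, rowc A (z j) k ^ 2 = rowc A (z j) j := by rw [hsq]; simp [sq]
    rw [this] at cs
    by_contra hc
    push Not at hc
    have h0 : 0 ≤ ∑ k, rowc A w k ^ 2 := Finset.sum_nonneg fun _ _ => sq_nonneg _
    nlinarith
  · rw [Set.indicator_of_notMem hA, zero_mul, hsq]
    exact Finset.sum_nonneg fun _ _ => mul_self_nonneg _

instance {n m : ℕ} : IsProbabilityMeasure (gaussianMatrix n m) := by
  unfold gaussianMatrix; infer_instance

lemma perm_mp {n m : ℕ} (s : Equiv.Perm (Fin m)) :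
    MeasurePreserving (fun (A : Fin n → Fin m → ℝ) i k => A i (s k))
      (gaussianMatrix n m) (gaussianMatrix n m) := by
  unfold gaussianMatrix
  have := measurePreserving_piCongrLeft (fun _ : Fin m => gaussianReal 0 1) s.symm
  have h2 := measurePreserving_pi (fun _ : Fin n => Measure.pi fun _ : Fin m => gaussianReal 0 1)
    (fun _ : Fin n => Measure.pi fun _ : Fin m => gaussianReal 0 1) (fun _ => this)
  convert h2 using 1
  ext A i k
  simp [MeasurableEquiv.piCongrLeft, Equiv.piCongrLeft, Equiv.piCongrLeft']

lemma bad_eq {n m : ℕ} (ε : ℝ) (j j' : Fin m) :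
    gaussianMatrix n m (badT ε j) = gaussianMatrix n m (badT ε j') := by
  have := (perm_mp (n := n) (Equiv.swap j j')).measure_preimage
    (badT_open (n := n) ε j).measurableSet.nullMeasurableSet
  rw [← this]
  congr 1
  ext A
  simp only [badT, Set.mem_preimage, Set.mem_ofPred_eq]
  refine exists_congr fun z => ?_
  have h : ∀ k, rowc (fun i k => A i (Equiv.swap j j' k)) z k = rowc A z (Equiv.swap j j' k) :=
    fun k => rfl
  simp_rw [h]
  rw [Equiv.sum_comp (Equiv.swap j j') (fun k => rowc A z k ^ 2)]
  simp

lemma bad_le {n m : ℕ} (ε : ℝ) (hε : 0 < ε) (j : Fin m) :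
    m * gaussianMatrix n m (badT ε j) ≤ ENNReal.ofReal (n / ε) := by
  have h1 : (m : ℝ≥0∞) * gaussianMatrix n m (badT ε j) =
      ∑ k : Fin m, gaussianMatrix n m (badT ε k) := by
    rw [Finset.sum_congr rfl fun k _ => bad_eq (n := n) ε k j]; simp
  rw [h1]
  have h2 : ∀ k : Fin m, gaussianMatrix n m (badT ε k) =
      ∫⁻ A, (badT ε k).indicator (fun _ => (1 : ℝ≥0∞)) A ∂(gaussianMatrix n m) := by
    intro k
    exact (lintegral_indicator_one (badT_open ε k).measurableSet).symm
  simp_rw [h2]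
  rw [← lintegral_finsetSum _ fun k _ => measurable_const.indicator (badT_open ε k).measurableSet]
  calc _ ≤ ∫⁻ A, ENNReal.ofReal (n / ε) ∂(gaussianMatrix n m) := by
        refine lintegral_mono fun A => ?_
        refine le_trans (le_of_eq ?_) (ENNReal.ofReal_le_ofReal (card_bad ε hε A))
        rw [ENNReal.ofReal_sum_of_nonneg]
        · refine Finset.sum_congr rfl fun k _ => ?_
          by_cases h : A ∈ badT ε k <;> simp [h]
        · intro k _
          exact Set.indicator_nonneg (fun _ _ => zero_le_one) _
    _ = _ := by simp

lemma lp2_apply {m : ℕ} (x : Fin m → ℝ) : lpnorm 2 x = (∑ j, |x j| ^ (2:ℝ)) ^ (1/2:ℝ) := by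
  simp [lpnorm]

lemma abs_le_lpnorm {p : ℝ≥0∞} (h0 : p ≠ 0) (h1 : p ≠ ∞) {m : ℕ} (x : Fin m → ℝ) (j : Fin m) :
    |x j| ≤ lpnorm p x := by
  have hp : 0 < p.toReal := ENNReal.toReal_pos h0 h1
  rw [lpnorm, if_neg h1, one_div, Real.le_rpow_inv_iff_of_pos (abs_nonneg _) _ hp]
  · exact Finset.single_le_sum (f := fun j => |x j| ^ p.toReal)
      (fun _ _ => by positivity) (Finset.mem_univ j)
  · positivity

lemma rad_ge {p : ℝ≥0∞} (h0 : p ≠ 0) (h1 : p ≠ ∞) {m : ℕ} (σ : Fin m → ℝ) (hσ : ∀ j, 0 < σ j)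
    (E : Set (Fin m → ℝ)) (x : Fin m → ℝ) (hx : x ∈ ellipsoid p σ) (hE : x ∈ E) (j : Fin m) :
    |x j| ≤ radq 2 (ellipsoid p σ) E := by
  refine (abs_le_lpnorm (p := 2) (by simp) (by simp) x j).trans ?_
  refine le_csSup ?_ ⟨x, ⟨hx, hE⟩, rfl⟩
  refine ⟨(∑ j, σ j ^ (2:ℝ)) ^ (1/2:ℝ), ?_⟩
  rintro _ ⟨y, ⟨hy, -⟩, rfl⟩
  rw [lp2_apply]
  gcongr with j
  have := (abs_le_lpnorm h0 h1 (fun j => y j / σ j) j).trans hy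
  rwa [abs_div, abs_of_pos (hσ j), div_le_one (hσ j)] at this

lemma pow_bound {p t u : ℝ} (hp0 : 0 < p) (hp : p ≤ 2) (ht : 0 < t) :
    |u| ^ p ≤ t ^ (-p) * (1 + (t * u) ^ 2) := by
  have h : |t * u| ^ p ≤ 1 + (t * u) ^ 2 := by
    rcases le_total |t * u| 1 with h | h
    · have := Real.rpow_le_one (abs_nonneg _) h hp0.le
      nlinarith [sq_nonneg (t * u)]
    · have := Real.rpow_le_rpow_of_exponent_le h hp
      rw [Real.rpow_two, sq_abs] at this
      linarith
  rw [abs_mul, abs_of_pos ht, Real.mul_rpow ht.le (abs_nonneg _)] at h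
  rw [Real.rpow_neg ht.le, inv_mul_eq_div, le_div_iff₀ (by positivity)]
  linarith

lemma good_rad {p : ℝ≥0∞} (hp1 : 1 < p) (hp2 : p ≤ 2) {lam : ℝ} (hlam0 : 0 < lam) {n m : ℕ}
    (hm : 0 < m) (h8 : 8 * n ≤ m)
    (hbig : (m : ℝ) ^ (lam * p.toReal + 1 - p.toReal) * (1 + 4 * n) ≤ 1)
    (A : Fin n → Fin m → ℝ) (hA : A ∉ badT (4 * n / m) (⟨0, hm⟩ : Fin m)) :
    1 / 4 ≤ radq 2 (ellipsoid p (fun j : Fin m => ((j : ℕ) + 1 : ℝ) ^ (-lam))) (kerSet A) := by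
  classical
  obtain ⟨z, h1, -⟩ := proj_exists A
  set o : Fin m := ⟨0, hm⟩ with ho
  set u : Fin m → ℝ := rowc A (z o) with hu
  have hpt : p ≠ ∞ := ne_top_of_le_ne_top (by simp) hp2
  have hp0 : p ≠ 0 := (zero_lt_one.trans hp1).ne'
  set P := p.toReal with hP
  have hP0 : 0 < P := ENNReal.toReal_pos hp0 hpt
  have hP1 : 1 ≤ P := by
    have := (ENNReal.toReal_le_toReal (by simp) hpt).2 hp1.le
    simpa using this
  have hP2 : P ≤ 2 := by
    have := (ENNReal.toReal_le_toReal hpt (by simp)).2 hp2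
    simpa using this
  have hm' : (0 : ℝ) < m := by exact_mod_cast hm
  have hsq : u o = ∑ k, u k ^ 2 := by
    rw [hu, sum_sq_eq A z o (z o) (h1 o)]; simp [sq]
  have hle : u o ^ 2 ≤ 4 * n / m * u o := by
    by_contra hc
    push Not at hc
    exact hA ⟨z o, by rw [← hu, ← hsq]; exact hc⟩
  have hu0 : 0 ≤ u o := by rw [hsq]; positivity
  have huε : u o ≤ 4 * n / m := by
    rcases hu0.eq_or_lt with h | h
    · rw [← h]; positivity
    · nlinarith
  have hε : (4 * n / m : ℝ) ≤ 1 / 2 := by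
    rw [div_le_iff₀ hm']
    have : (8 * n : ℝ) ≤ m := by exact_mod_cast h8
    linarith
  set x : Fin m → ℝ := fun k => ((if k = o then 1 else 0) - u k) with hx
  have hxk : x ∈ kerSet A := h1 o
  have hxo : x o = 1 - u o := by simp [hx]
  have key : (fun k => x k / 2) ∈
      ellipsoid p (fun j : Fin m => ((j : ℕ) + 1 : ℝ) ^ (-lam)) := by
    simp only [ellipsoid, Set.mem_ofPred_eq, lpnorm, if_neg hpt]
    refine Real.rpow_le_one (by positivity) ?_ (by positivity)
    rw [← hP]
    have hterm : ∀ k : Fin m, |x k / 2 / ((k : ℕ) + 1 : ℝ) ^ (-lam)| ^ P ≤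
        (1 / 2) * ((if k = o then 1 else 0) +
          (m : ℝ) ^ (lam * P) * ((m : ℝ) ^ (-P) * (1 + (m * u k) ^ 2))) := by
      intro k
      have hk : (0 : ℝ) < (k : ℕ) + 1 := by positivity
      have e1 : |x k / 2 / ((k : ℕ) + 1 : ℝ) ^ (-lam)| =
          (1 / 2) * (((k : ℕ) + 1 : ℝ) ^ lam * |x k|) := by
        rw [Real.rpow_neg hk.le, div_inv_eq_mul, abs_mul, abs_div,
          abs_of_pos (Real.rpow_pos_of_pos hk _)]
        simp; ring
      rw [e1, Real.mul_rpow (by norm_num) (by positivity)]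
      have e2 : (1 / 2 : ℝ) ^ P ≤ 1 / 2 := by
        have := Real.rpow_le_rpow_of_exponent_ge (x := (1/2 : ℝ)) (by norm_num) (by norm_num) hP1
        simpa using this
      refine mul_le_mul e2 ?_ (by positivity) (by norm_num)
      by_cases hko : k = o
      · have : (((k : ℕ) : ℝ) + 1) ^ lam * |x k| ≤ 1 := by
          rw [hko, hxo]
          have : ((o : ℕ) : ℝ) = 0 := by simp [ho]
          rw [this, zero_add, Real.one_rpow, one_mul, abs_le]
          constructor <;> linarith
        have := Real.rpow_le_one (by positivity) this hP0.le
        rw [if_pos hko]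
        have : 0 ≤ (m : ℝ) ^ (lam * P) * ((m : ℝ) ^ (-P) * (1 + (m * u k) ^ 2)) := by positivity
        linarith
      · rw [if_neg hko, zero_add, Real.mul_rpow (by positivity) (by positivity),
          ← Real.rpow_mul hk.le]
        have hxk : |x k| = |u k| := by simp [hx, hko]
        rw [hxk]
        refine mul_le_mul ?_ (pow_bound hP0 hP2 hm') (by positivity) (by positivity)
        refine Real.rpow_le_rpow hk.le ?_ (by positivity)
        exact_mod_cast k.2
    refine (Finset.sum_le_sum fun k _ => hterm k).trans ?_
    rw [← Finset.mul_sum, Finset.sum_add_distrib, ← Finset.mul_sum, ← Finset.mul_sum,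
      Finset.sum_add_distrib]
    have s1 : ∑ k, (m * u k) ^ 2 = m ^ 2 * u o := by
      rw [hsq, Finset.mul_sum]; simp [mul_pow]
    rw [s1]
    simp only [Finset.sum_ite_eq', Finset.mem_univ, if_true, Finset.sum_const, Finset.card_univ,
      Fintype.card_fin, nsmul_eq_mul, mul_one]
    have s2 : (m : ℝ) ^ (lam * P + 1 - P) = m ^ (lam * P) * (m ^ (-P) * m) := by
      rw [sub_eq_add_neg, Real.rpow_add hm', Real.rpow_add hm', Real.rpow_one]; ring
    rw [s2] at hbig
    have s3 : (m : ℝ) + m ^ 2 * u o ≤ m * (1 + 4 * n) := by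
      have : (m : ℝ) * u o ≤ 4 * n := by
        rw [le_div_iff₀ hm'] at huε; linarith
      nlinarith
    have s4 : (m : ℝ) ^ (lam * P) * (m ^ (-P) * (m + m ^ 2 * u o)) ≤
      m ^ (lam * P) * (m ^ (-P) * (m * (1 + 4 * n))) := by gcongr
    nlinarith
  have hker : (fun k => x k / 2) ∈ kerSet A := by
    intro i
    have := hxk i
    simp_rw [← mul_div_assoc]
    rw [← Finset.sum_div, this, zero_div]
  have := rad_ge hp0 hpt _ (fun j => by positivity) (kerSet A) _ key hker o
  refine le_trans ?_ this
  refine le_trans ?_ (le_abs_self _)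
  simp only [hxo]
  linarith

/-- For `1 < p ≤ 2` and `0 < λ < 1/p* = 1 - 1/p`, with `σ_j = j^{-λ}`
(0-indexed), the polynomial decay rate of the radius of random information is `0`: for every
`ρ > 0` and all constants `C, C₁, C₂ > 0` there exist `1 ≤ n < m` such that the probability
that `rad(E^m_{p,σ}, ker G_{n,m}) ≤ C n^{-ρ}` is smaller than `1 - C₁ exp(-C₂ n)`. -/
theorem statement6 (p : ℝ≥0∞) (hp1 : 1 < p) (hp2 : p ≤ 2) (lam : ℝ)
    (hlam0 : 0 < lam) (hlam : lam < 1 - 1 / p.toReal) :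
    ∀ ρ C C₁ C₂ : ℝ, 0 < ρ → 0 < C → 0 < C₁ → 0 < C₂ →
      ∃ (m n : ℕ), 1 ≤ n ∧ n < m ∧
        gaussianMatrix n m {A |
            radq 2 (ellipsoid p (fun j : Fin m => ((j : ℕ) + 1 : ℝ) ^ (-lam))) (kerSet A) ≤
              C * (n : ℝ) ^ (-ρ)} <
          ENNReal.ofReal (1 - C₁ * Real.exp (-C₂ * n)) := by
  intro ρ C C₁ C₂ hρ hC hC₁ hC₂
  have hpt : p ≠ ∞ := ne_top_of_le_ne_top (by simp) hp2
  have hp0 : p ≠ 0 := (zero_lt_one.trans hp1).ne'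
  have hP0 : 0 < p.toReal := ENNReal.toReal_pos hp0 hpt
  have t1 : Filter.Tendsto (fun n : ℕ => C * (n : ℝ) ^ (-ρ)) Filter.atTop (nhds 0) := by
    have := ((tendsto_rpow_neg_atTop hρ).comp tendsto_natCast_atTop_atTop).const_mul C
    simpa using this
  have t2 : Filter.Tendsto (fun n : ℕ => C₁ * Real.exp (-C₂ * n)) Filter.atTop (nhds 0) := by
    have h : Filter.Tendsto (fun n : ℕ => -(C₂ * (n : ℝ))) Filter.atTop Filter.atBot :=
      Filter.tendsto_neg_atTop_atBot.comp
        (tendsto_natCast_atTop_atTop.const_mul_atTop hC₂)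
    have := (Real.tendsto_exp_atBot.comp h).const_mul C₁
    simpa using this
  obtain ⟨n, hn1, hn2, hn⟩ := ((t1.eventually (gt_mem_nhds (show (0:ℝ) < 1/4 by norm_num))).and
    ((t2.eventually (gt_mem_nhds (show (0:ℝ) < 1/2 by norm_num))).and
      (Filter.eventually_ge_atTop 1))).exists
  have hexp : 0 < -(lam * p.toReal + 1 - p.toReal) := by
    have := mul_lt_mul_of_pos_right hlam hP0
    rw [sub_mul, one_div, inv_mul_cancel₀ hP0.ne'] at this
    linarith
  have t3 : Filter.Tendsto (fun m : ℕ => (m : ℝ) ^ (lam * p.toReal + 1 - p.toReal) * (1 + 4 * n))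
      Filter.atTop (nhds 0) := by
    have := ((tendsto_rpow_neg_atTop hexp).comp tendsto_natCast_atTop_atTop).mul_const
      (1 + 4 * (n : ℝ))
    simpa only [neg_neg, zero_mul, Function.comp_def] using this
  obtain ⟨m, hm1, hm2⟩ := ((t3.eventually (gt_mem_nhds (show (0:ℝ) < 1 by norm_num))).and
      (Filter.eventually_ge_atTop (8 * n))).exists
  have hm : 0 < m := by omega
  refine ⟨m, n, hn, by omega, ?_⟩
  have hm' : (0 : ℝ) < m := by exact_mod_cast hm
  have hn' : (0 : ℝ) < n := by exact_mod_cast hn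
  have hsub : {A | radq 2 (ellipsoid p (fun j : Fin m => ((j : ℕ) + 1 : ℝ) ^ (-lam))) (kerSet A) ≤
              C * (n : ℝ) ^ (-ρ)} ⊆ badT (n := n) (4 * n / m) (⟨0, hm⟩ : Fin m) := by
    intro A hA
    by_contra hc
    have := good_rad hp1 hp2 hlam0 hm hm2 hm1.le A hc
    rw [Set.mem_ofPred_eq] at hA
    linarith
  refine (measure_mono hsub).trans_lt ?_
  have hb := bad_le (n := n) (4 * n / m) (by positivity) (⟨0, hm⟩ : Fin m)
  have hq : gaussianMatrix n m (badT (4 * n / m) (⟨0, hm⟩ : Fin m)) ≤ ENNReal.ofReal (1 / 4) := by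
    have e : (n : ℝ) / (4 * n / m) = m * (1 / 4) := by field_simp
    rw [e, ENNReal.ofReal_mul hm'.le, ENNReal.ofReal_natCast] at hb
    exact (ENNReal.mul_le_mul_iff_right (by exact_mod_cast hm.ne') (by simp)).1 hb
  refine hq.trans_lt ?_
  rw [ENNReal.ofReal_lt_ofReal_iff (by linarith)]
  linarith
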